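/- Let e ∈ {0,1,2} and let r be an integer with r ≥ e+3 and r ≡ e+1 (mod 2). Let V be an F-vector space of dimension r+3 and Q a nondegenerate quadratic form on V of Witt defect e. Let S be a spread of Q, fix Σ₀ ∈ S, a nonzero vector p ∈ Σ₀, and a hyperplane U of V with p ∉ U. Set H = U ∩ p^⊥, Π = Σ₀ ∩ H, and for each Σ ∈ S \ {Σ₀} set S_Σ = (span{p} + Σ) ∩ U. Then the restriction of Q to H is a nondegenerate quadratic form on the (r+1)-dimensional space H of Witt defect e, Π is a generator of this restriction, and the family {S_Σ : Σ ∈ S \ {Σ₀}} is a hyperbolic, parabolic or elliptic avsp for (U, H, Q|_H, Π) according as e = 0, 1 or 2. -/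

import Mathlib

open Module Submodule

section Defs

variable {F : Type*} [Field F] {V : Type*} [AddCommGroup V] [Module F V]

/-- A subspace is totally singular if the quadratic form vanishes on it. -/
def IsTotallySingular (Q : QuadraticForm F V) (W : Submodule F V) : Prop :=
  ∀ x ∈ W, Q x = 0

/-- The Witt index: maximal dimension of a totally singular subspace. -/
noncomputable def wittIndex (Q : QuadraticForm F V) : ℕ :=
  sSup {n : ℕ | ∃ W : Submodule F V, IsTotallySingular Q W ∧ Module.finrank F ↥W = n}

/-- Nondegeneracy: the only singular vector orthogonal to everything is `0`. -/
def QuadNondeg (Q : QuadraticForm F V) : Prop :=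
  ∀ v : V, Q v = 0 → (∀ x : V, QuadraticMap.polar Q v x = 0) → v = 0

/-- A generator: totally singular subspace of dimension the Witt index. -/
def IsGenerator (Q : QuadraticForm F V) (G : Submodule F V) : Prop :=
  IsTotallySingular Q G ∧ Module.finrank F ↥G = wittIndex Q

/-- A spread of `Q`. -/
def IsSpread (Q : QuadraticForm F V) (S : Set (Submodule F V)) : Prop :=
  (∀ G ∈ S, IsGenerator Q G) ∧
  (∀ G ∈ S, ∀ G' ∈ S, G ≠ G' → G ⊓ G' = ⊥) ∧
  (∀ v : V, Q v = 0 → ∃ G ∈ S, v ∈ G)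

/-- The perp of a vector with respect to the polar form of `Q`. -/
def vecPerp (Q : QuadraticForm F V) (u : V) : Submodule F V :=
  LinearMap.ker (QuadraticMap.polarBilin Q u)

/-- The perp of a subspace with respect to the polar form of `Q`. -/
def subPerp (Q : QuadraticForm F V) (G : Submodule F V) : Submodule F V :=
  ⨅ g ∈ G, vecPerp Q g

/-- Hyperbolic (e = 0), parabolic (e = 1) or elliptic (e = 2) affine vector space
partition for `(U, H, Q, Pgen)`. -/
def IsAvsp [Fintype F] (e r : ℕ) {U : Type*} [AddCommGroup U] [Module F U]
    (H : Submodule F U) (Q : QuadraticForm F ↥H) (Pgen : Submodule F ↥H)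
    (P : Set (Submodule F U)) : Prop :=
  P.ncard = Fintype.card F ^ ((r + e + 1) / 2) ∧
  (∀ S ∈ P, Module.finrank F ↥S = (r + 3 - e) / 2 ∧ ¬ S ≤ H) ∧
  (∀ L : Submodule F U, Module.finrank F ↥L = 1 → ¬ L ≤ H → ∃! S, S ∈ P ∧ L ≤ S) ∧
  (∀ S ∈ P, IsGenerator Q (S.comap H.subtype) ∧ S.comap H.subtype ⊓ Pgen = ⊥) ∧
  (∀ S ∈ P, ∀ T ∈ P, S ≠ T → S.comap H.subtype ≠ T.comap H.subtype) ∧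
  (∀ S ∈ P, ∀ T ∈ P, S ≠ T → Module.finrank F ↥(S ⊓ T) ≤ 1) ∧
  (∀ S ∈ P, ∀ T ∈ P, S ≠ T →
    Module.finrank F ↥(S.comap H.subtype ⊓ T.comap H.subtype) = 1 →
      QuadNondeg (Q.comp ((S ⊔ T).comap H.subtype).subtype) ∧
      Module.finrank F ↥((S ⊔ T).comap H.subtype) =
        2 * wittIndex (Q.comp ((S ⊔ T).comap H.subtype).subtype))

end Defs

section Coatom

variable {F : Type*} [Field F] {V : Type*} [AddCommGroup V] [Module F V]

theorem isCoatom_of_finrank_add_one [FiniteDimensional F V] {U : Submodule F V}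
    (h : finrank F U + 1 = finrank F V) : IsCoatom U := by
  refine ⟨fun hU => ?_, fun W hW => ?_⟩
  · rw [hU, finrank_top] at h
    omega
  · have h₁ := Submodule.finrank_lt_finrank_of_lt hW
    have h₂ := Submodule.finrank_le W
    exact Submodule.eq_top_of_finrank_eq (by omega)

theorem exists_add_smul_mem_of_isCoatom {U : Submodule F V} (hU : IsCoatom U) {p : V}
    (hp : p ∉ U) (v : V) : ∃ c : F, v + c • p ∈ U := by
  have hv : v ∈ U ⊔ span F {p} := by
    rw [(isCompl_span_singleton_of_isCoatom_of_notMem hU hp).sup_eq_top]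
    trivial
  obtain ⟨u, hu, y, hy, rfl⟩ := mem_sup.1 hv
  obtain ⟨c, rfl⟩ := mem_span_singleton.1 hy
  exact ⟨-c, by simpa using hu⟩

theorem finrank_span_singleton_sup [FiniteDimensional F V] {G : Submodule F V} {p : V}
    (hp : p ∉ G) : finrank F ↥(span F {p} ⊔ G) = finrank F G + 1 := by
  have hp0 : p ≠ 0 := fun h => hp (h ▸ G.zero_mem)
  have h := Submodule.finrank_sup_add_finrank_inf_eq (span F {p}) G
  have hd : span F {p} ⊓ G = ⊥ := by
    rw [← disjoint_iff, disjoint_comm, disjoint_span_singleton' hp0]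
    exact hp
  rw [hd, finrank_bot, finrank_span_singleton hp0] at h
  omega

theorem finrank_inf_add_one_of_isCoatom [FiniteDimensional F V] {U X : Submodule F V}
    (hU : IsCoatom U) {p : V} (hpX : p ∈ X) (hpU : p ∉ U) :
    finrank F ↥(X ⊓ U) + 1 = finrank F X := by
  have hX : X = span F {p} ⊔ X ⊓ U := by
    refine le_antisymm (fun x hx => ?_)
      (sup_le ((span_singleton_le_iff_mem _ _).2 hpX) inf_le_left)
    obtain ⟨c, hc⟩ := exists_add_smul_mem_of_isCoatom hU hpU x
    have hxc : x + c • p ∈ X ⊓ U := ⟨X.add_mem hx (X.smul_mem c hpX), hc⟩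
    refine mem_sup.2 ⟨(-c) • p, smul_mem _ _ (mem_span_singleton_self p), _, hxc, ?_⟩
    module
  conv_rhs => rw [hX]
  exact (finrank_span_singleton_sup fun h => hpU (mem_inf.1 h).2).symm

theorem mem_span_singleton_sup_iff_sub_smul {G : Submodule F V} {p x : V} :
    x ∈ span F {p} ⊔ G ↔ ∃ a : F, x - a • p ∈ G := by
  constructor
  · intro hx
    obtain ⟨y, hy, g, hg, rfl⟩ := mem_sup.1 hx
    obtain ⟨a, rfl⟩ := mem_span_singleton.1 hy
    exact ⟨a, by simpa using hg⟩
  · rintro ⟨a, ha⟩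
    exact mem_sup.2 ⟨a • p, smul_mem _ _ (mem_span_singleton_self p), _, ha, add_sub_cancel _ _⟩

theorem eq_zero_of_smul_mem {U : Submodule F V} {p : V} (hp : p ∉ U) {c : F} (h : c • p ∈ U) :
    c = 0 := by
  by_contra hc
  exact hp ((U.smul_mem_iff hc).1 h)

theorem mem_sup_of_mem_span_singleton_sup {U G G' : Submodule F V} {p x : V} (hp : p ∉ U)
    (hGG' : G ⊓ G' = ⊥) (hxU : x ∈ U) (hx0 : x ≠ 0) (hx : x ∈ span F {p} ⊔ G)
    (hx' : x ∈ span F {p} ⊔ G') : p ∈ G ⊔ G' := by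
  obtain ⟨a, ha⟩ := mem_span_singleton_sup_iff_sub_smul.1 hx
  obtain ⟨b, hb⟩ := mem_span_singleton_sup_iff_sub_smul.1 hx'
  have hab : b - a ≠ 0 := by
    intro h
    rw [sub_eq_zero.1 h] at hb
    have h0 : x - a • p ∈ G ⊓ G' := ⟨ha, hb⟩
    rw [hGG', mem_bot, sub_eq_zero] at h0
    have ha0 : a = 0 := eq_zero_of_smul_mem hp (h0 ▸ hxU)
    rw [ha0, zero_smul] at h0
    exact hx0 h0
  refine ((G ⊔ G').smul_mem_iff hab).1 ?_
  have h := sub_mem (mem_sup_left ha : _ ∈ G ⊔ G') (mem_sup_right hb)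
  convert h using 1
  module

theorem finrank_span_singleton_sup_inf_le_two [FiniteDimensional F V] {G G' : Submodule F V}
    {p : V} (hp : p ∉ G) (hp' : p ∉ G') (hGG' : G ⊓ G' = ⊥) :
    finrank F ↥((span F {p} ⊔ G) ⊓ (span F {p} ⊔ G')) ≤ 2 := by
  set N := (span F {p} ⊔ G) ⊓ (span F {p} ⊔ G') with hN
  have h₁ := Submodule.finrank_sup_add_finrank_inf_eq N G
  have h₂ := Submodule.finrank_mono
    (sup_le inf_le_left le_sup_right : N ⊔ G ≤ span F {p} ⊔ G)
  have h₃ := Submodule.finrank_sup_add_finrank_inf_eq (N ⊓ G) G'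
  have h₄ := Submodule.finrank_mono (sup_le (inf_le_left.trans inf_le_right) le_sup_right :
    (N ⊓ G) ⊔ G' ≤ span F {p} ⊔ G')
  have h₅ : (N ⊓ G) ⊓ G' = ⊥ := le_bot_iff.1 ((inf_le_inf_right _ inf_le_right).trans hGG'.le)
  rw [finrank_span_singleton_sup hp] at h₂
  rw [finrank_span_singleton_sup hp'] at h₄
  rw [h₅, finrank_bot] at h₃
  omega

theorem finrank_comap_of_injective {M : Type*} [AddCommGroup M] [Module F M] {f : M →ₗ[F] V}
    (hf : Function.Injective f) (X : Submodule F V) :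
    finrank F ↥(X.comap f) = finrank F ↥(X ⊓ LinearMap.range f) := by
  rw [inf_comm, ← map_comap_eq]
  exact (equivMapOfInjective f hf _).finrank_eq

theorem comap_subtype_sup_of_isCoatom {U N N' : Submodule F V} (hU : IsCoatom U) {p : V}
    (hpU : p ∉ U) (hpN : p ∈ N) (hpN' : p ∈ N') :
    N.comap U.subtype ⊔ N'.comap U.subtype = (N ⊔ N').comap U.subtype := by
  refine le_antisymm (sup_le (comap_mono le_sup_left) (comap_mono le_sup_right)) ?_
  rintro ⟨x, hx⟩ h
  obtain ⟨n, hn, n', hn', hnn⟩ := mem_sup.1 (mem_comap.1 h)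
  obtain ⟨c, hc⟩ := exists_add_smul_mem_of_isCoatom hU hpU n
  have hxn : n + n' = x := hnn
  refine mem_sup.2 ⟨⟨n + c • p, hc⟩, N.add_mem hn (N.smul_mem c hpN),
    ⟨x - (n + c • p), U.sub_mem hx hc⟩, ?_, Subtype.ext (add_sub_cancel _ _)⟩
  change x - (n + c • p) ∈ N'
  have : x - (n + c • p) = n' - c • p := by rw [← hxn]; module
  rw [this]
  exact N'.sub_mem hn' (N'.smul_mem c hpN')

theorem ncard_mul_pow_eq_pow [Fintype F] [FiniteDimensional F V] {H : Submodule F V}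
    {P : Set (Submodule F V)} {k n : ℕ} (hH : IsCoatom H) (hn : finrank F V = n + 1)
    (hk : ∀ S ∈ P, finrank F S = k + 1 ∧ ¬ S ≤ H)
    (hP : ∀ v ∉ H, ∃! S, S ∈ P ∧ v ∈ S) :
    P.ncard * Fintype.card F ^ k = Fintype.card F ^ n := by
  classical
  have : Finite V := Module.finite_of_finite F
  have := Fintype.ofFinite V
  have hq : 1 < Fintype.card F := Fintype.one_lt_card
  have key : ∀ (S : Submodule F V) (m : ℕ), finrank F S = m + 1 → ¬ S ≤ H →
      (Finset.univ.filter fun v => v ∈ S ∧ v ∉ H).card =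
        Fintype.card F ^ m * (Fintype.card F - 1) := by
    intro S m hS hSH
    obtain ⟨x, hxS, hxH⟩ := Set.not_subset.1 hSH
    have h := finrank_inf_add_one_of_isCoatom hH hxS hxH
    have card_eq : ∀ W : Submodule F V,
        (Finset.univ.filter fun v => v ∈ W).card = Fintype.card F ^ finrank F W := by
      intro W
      rw [← Module.card_eq_pow_finrank (K := F) (V := W), Fintype.card_subtype]
    have hsplit := Finset.card_filter_add_card_filter_not
      (s := Finset.univ.filter fun v => v ∈ S) (fun v => v ∈ H)
    rw [Finset.filter_filter, Finset.filter_filter, card_eq S, hS] at hsplit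
    have h₁ := card_eq (S ⊓ H)
    simp only [mem_inf] at h₁
    rw [h₁, show finrank F ↥(S ⊓ H) = m by omega] at hsplit
    rw [Nat.mul_sub, mul_one, ← pow_succ]
    omega
  have hPfin : P.Finite := Set.toFinite P
  have hunion : (Finset.univ.filter fun v => v ∈ (⊤ : Submodule F V) ∧ v ∉ H) =
      hPfin.toFinset.biUnion fun S => Finset.univ.filter fun v => v ∈ S ∧ v ∉ H := by
    ext v
    simp only [Finset.mem_filter, Finset.mem_biUnion, Finset.mem_univ, true_and, mem_top,
      Set.Finite.mem_toFinset]
    constructor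
    · intro hv
      obtain ⟨S, ⟨hS, hvS⟩, -⟩ := hP v hv
      exact ⟨S, hS, hvS, hv⟩
    · rintro ⟨S, -, -, hv⟩
      exact hv
  have hcard := congrArg Finset.card hunion
  rw [key ⊤ n (by rw [finrank_top, hn]) (fun h => hH.1 (top_le_iff.1 h)),
    Finset.card_biUnion, Finset.sum_congr rfl fun S hS => key S k
      (hk S (hPfin.mem_toFinset.1 hS)).1 (hk S (hPfin.mem_toFinset.1 hS)).2,
    Finset.sum_const, smul_eq_mul, ← mul_assoc, ← Set.ncard_eq_toFinset_card P hPfin] at hcard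
  · exact (Nat.eq_of_mul_eq_mul_right (by omega) hcard).symm
  · intro S hS T hT hST
    rw [Function.onFun, Finset.disjoint_left]
    intro v hvS hvT
    rw [Finset.mem_filter] at hvS hvT
    exact hST ((hP v hvS.2.2).unique ⟨hPfin.mem_toFinset.1 hS, hvS.2.1⟩
      ⟨hPfin.mem_toFinset.1 hT, hvT.2.1⟩)

end Coatom

section Witt

variable {F : Type*} [Field F] {V : Type*} [AddCommGroup V] [Module F V] {Q : QuadraticForm F V}

theorem mem_vecPerp {u x : V} : x ∈ vecPerp Q u ↔ QuadraticMap.polar Q u x = 0 := Iff.rfl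

theorem isCoatom_vecPerp {u x : V} (h : x ∉ vecPerp Q u) : IsCoatom (vecPerp Q u) := by
  refine LinearMap.isCoatom_ker_of_surjective (LinearMap.surjective fun h0 => h ?_)
  rw [vecPerp, h0]
  simp

theorem IsTotallySingular.polar_eq_zero {W : Submodule F V} (hW : IsTotallySingular Q W) {x y : V}
    (hx : x ∈ W) (hy : y ∈ W) : QuadraticMap.polar Q x y = 0 := by
  simp [QuadraticMap.polar, hW _ hx, hW _ hy, hW _ (W.add_mem hx hy)]

theorem IsTotallySingular.span_singleton_sup {W : Submodule F V} (hW : IsTotallySingular Q W)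
    {p : V} (hp : Q p = 0) (hWp : W ≤ vecPerp Q p) : IsTotallySingular Q (span F {p} ⊔ W) := by
  intro x hx
  obtain ⟨y, hy, g, hg, rfl⟩ := mem_sup.1 hx
  obtain ⟨c, rfl⟩ := mem_span_singleton.1 hy
  rw [QuadraticMap.map_add Q, QuadraticMap.map_smul, QuadraticMap.polar_smul_left, hp, hW g hg,
    mem_vecPerp.1 (hWp hg)]
  simp

theorem IsTotallySingular.finrank_le_wittIndex [FiniteDimensional F V] {W : Submodule F V}
    (hW : IsTotallySingular Q W) : finrank F W ≤ wittIndex Q :=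
  le_csSup ⟨finrank F V, by rintro _ ⟨X, -, rfl⟩; exact X.finrank_le⟩ ⟨W, hW, rfl⟩

theorem not_le_vecPerp_of_finrank_maximal [FiniteDimensional F V] {K G : Submodule F V} {n : ℕ}
    (hmax : ∀ X ≤ K, IsTotallySingular Q X → finrank F X ≤ n) (hGK : G ≤ K)
    (hG : IsTotallySingular Q G) (hGn : finrank F G = n) {p : V} (hpK : p ∈ K) (hp : Q p = 0)
    (hpG : p ∉ G) : ¬ G ≤ vecPerp Q p := by
  intro h
  have h₁ := hmax _ (sup_le ((span_singleton_le_iff_mem _ _).2 hpK) hGK)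
    (hG.span_singleton_sup hp h)
  rw [finrank_span_singleton_sup hpG] at h₁
  omega

theorem wittIndex_comp_eq {M : Type*} [AddCommGroup M] [Module F M] {f : M →ₗ[F] V}
    (hf : Function.Injective f) {n : ℕ} {X : Submodule F V} (hXf : X ≤ LinearMap.range f)
    (hX : IsTotallySingular Q X) (hXn : finrank F X = n)
    (hmax : ∀ Y ≤ LinearMap.range f, IsTotallySingular Q Y → finrank F Y ≤ n) :
    wittIndex (Q.comp f) = n := by
  refine IsGreatest.csSup_eq ⟨⟨X.comap f, fun x hx => hX _ hx, ?_⟩, ?_⟩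
  · rw [finrank_comap_of_injective hf, inf_eq_left.2 hXf, hXn]
  · rintro _ ⟨W, hW, rfl⟩
    rw [(equivMapOfInjective f hf W).finrank_eq]
    refine hmax _ LinearMap.map_le_range ?_
    rintro _ ⟨w, hw, rfl⟩
    exact hW w hw

/-- Restricting a form that is nondegenerate on `K` to the trace on `K ∩ p^⊥` of a hyperplane
missing the singular vector `p` preserves nondegeneracy, and lowers the dimension by two and the
Witt index by one. -/
theorem nondeg_finrank_wittIndex_of_range_eq [FiniteDimensional F V] {K U : Submodule F V}
    {p : V} {m : ℕ} (hK : ∀ v ∈ K, Q v = 0 → (∀ x ∈ K, QuadraticMap.polar Q v x = 0) → v = 0)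
    (hpK : p ∈ K) (hp : Q p = 0) (hp0 : p ≠ 0) (hU : IsCoatom U) (hpU : p ∉ U)
    (hmax : ∀ X ≤ K, IsTotallySingular Q X → finrank F X ≤ m + 1)
    {M : Type*} [AddCommGroup M] [Module F M] {f : M →ₗ[F] V} (hf : Function.Injective f)
    (hrange : LinearMap.range f = (K ⊓ vecPerp Q p) ⊓ U)
    {X : Submodule F V} (hXf : X ≤ LinearMap.range f)
    (hX : IsTotallySingular Q X) (hXm : finrank F X = m) :
    QuadNondeg (Q.comp f) ∧ finrank F M + 2 = finrank F K ∧ wittIndex (Q.comp f) = m := by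
  have hpp : p ∈ vecPerp Q p := by simp [mem_vecPerp, QuadraticMap.polar_self, hp]
  obtain ⟨x₀, hx₀K, hx₀⟩ : ∃ x ∈ K, QuadraticMap.polar Q p x ≠ 0 := by
    by_contra! h
    exact hp0 (hK p hpK hp h)
  refine ⟨fun v hv hvM => ?_, ?_, wittIndex_comp_eq hf hXf hX hXm fun Y hY hYs => ?_⟩
  · have hfv : f v ∈ (K ⊓ vecPerp Q p) ⊓ U := hrange ▸ LinearMap.mem_range_self f v
    have hvp : QuadraticMap.polar Q (f v) p = 0 := by
      rw [QuadraticMap.polar_comm]; exact hfv.1.2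
    have hvr : ∀ h ∈ (K ⊓ vecPerp Q p) ⊓ U, QuadraticMap.polar Q (f v) h = 0 := by
      rw [← hrange]
      rintro _ ⟨y, rfl⟩
      have := hvM y
      simpa [QuadraticMap.polar, QuadraticMap.comp_apply, map_add] using this
    set c := QuadraticMap.polar Q (f v) x₀ / QuadraticMap.polar Q p x₀ with hc
    have h0 : f v + (-c) • p = 0 := by
      refine hK _ (K.add_mem hfv.1.1 (K.smul_mem _ hpK)) ?_ fun x hx => ?_
      · rw [QuadraticMap.map_add Q, QuadraticMap.map_smul, QuadraticMap.polar_smul_right, hp, hvp]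
        simpa using hv
      · set t := QuadraticMap.polar Q p x / QuadraticMap.polar Q p x₀ with ht
        obtain ⟨s, hs⟩ := exists_add_smul_mem_of_isCoatom hU hpU (x + (-t) • x₀)
        have hyp : x + (-t) • x₀ ∈ vecPerp Q p := by
          rw [mem_vecPerp, QuadraticMap.polar_add_right, QuadraticMap.polar_smul_right,
            smul_eq_mul, ht]
          field_simp
          ring
        have h := hvr _ ⟨⟨K.add_mem (K.add_mem hx (K.smul_mem _ hx₀K)) (K.smul_mem s hpK),
          (vecPerp Q p).add_mem hyp ((vecPerp Q p).smul_mem s hpp)⟩, hs⟩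
        simp only [QuadraticMap.polar_add_right, QuadraticMap.polar_smul_right, smul_eq_mul,
          hvp] at h
        rw [QuadraticMap.polar_add_left, QuadraticMap.polar_smul_left, smul_eq_mul, hc]
        rw [ht] at h
        linear_combination h
    have hcp : f v = c • p := by
      rw [neg_smul] at h0
      exact (add_neg_eq_zero.1 h0)
    have hc0 : c = 0 := by
      by_contra hne
      exact hpU ((U.smul_mem_iff hne).1 (hcp ▸ hfv.2))
    apply hf
    rw [hcp, hc0, zero_smul, map_zero]
  · have h₁ := finrank_inf_add_one_of_isCoatom (isCoatom_vecPerp (Q := Q) hx₀) hx₀K hx₀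
    have h₂ := finrank_inf_add_one_of_isCoatom hU
      (show p ∈ K ⊓ vecPerp Q p from ⟨hpK, hpp⟩) hpU
    rw [← hrange, LinearMap.finrank_range_of_inj hf] at h₂
    omega
  · have hY' := hY.trans hrange.le
    have h := hmax _ (sup_le ((span_singleton_le_iff_mem _ _).2 hpK)
      (hY'.trans (inf_le_left.trans inf_le_left)))
      (hYs.span_singleton_sup hp (hY'.trans (inf_le_left.trans inf_le_right)))
    rw [finrank_span_singleton_sup fun hpY => hpU (hY' hpY).2] at h
    omega

/-- Two maximal totally singular subspaces with zero intersection span a nondegenerate space. -/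
theorem nondeg_sup_of_inf_eq_bot [FiniteDimensional F V] {G G' : Submodule F V} {n : ℕ}
    (hmax : ∀ X, IsTotallySingular Q X → finrank F X ≤ n)
    (hG : IsTotallySingular Q G) (hGn : finrank F G = n)
    (hG' : IsTotallySingular Q G') (hGn' : finrank F G' = n) (hGG' : G ⊓ G' = ⊥) {v : V}
    (hv : v ∈ G ⊔ G') (hvp : ∀ x ∈ G ⊔ G', QuadraticMap.polar Q v x = 0) : v = 0 := by
  have aux : ∀ {A B : Submodule F V}, IsTotallySingular Q A → IsTotallySingular Q B →
      finrank F B = n → A ⊓ B = ⊥ → ∀ a ∈ A, B ≤ vecPerp Q a → a = 0 := by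
    intro A B hA hB hBn hAB a ha haB
    by_contra hne
    refine not_le_vecPerp_of_finrank_maximal (K := ⊤) (fun X _ => hmax X) le_top hB hBn trivial
      (hA a ha) (fun haB => hne ?_) haB
    simpa [hAB] using (show a ∈ A ⊓ B from ⟨ha, haB⟩)
  obtain ⟨g, hg, g', hg', rfl⟩ := mem_sup.1 hv
  have h₁ : g = 0 := aux hG hG' hGn' hGG' g hg fun x hx => by
    have h := hvp x (mem_sup_right hx)
    rwa [QuadraticMap.polar_add_left, hG'.polar_eq_zero hg' hx, add_zero] at h
  have h₂ : g' = 0 := aux hG' hG hGn (inf_comm G G' ▸ hGG') g' hg' fun x hx => by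
    have h := hvp x (mem_sup_left hx)
    rwa [QuadraticMap.polar_add_left, hG.polar_eq_zero hg hx, zero_add] at h
  rw [h₁, h₂, add_zero]

theorem map_sub_smul_of_map_eq_zero {p : V} (hp : Q p = 0) (v : V) (a : F) :
    Q (v - a • p) = Q v - a * QuadraticMap.polar Q p v := by
  rw [sub_eq_add_neg, QuadraticMap.map_add Q, QuadraticMap.map_neg, QuadraticMap.map_smul, hp,
    QuadraticMap.polar_neg_right, QuadraticMap.polar_smul_right, QuadraticMap.polar_comm]
  simp [sub_eq_add_neg]

theorem IsTotallySingular.span_singleton_sup_inf_vecPerp {G : Submodule F V}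
    (hG : IsTotallySingular Q G) {p : V} (hp : Q p = 0) :
    IsTotallySingular Q ((span F {p} ⊔ G) ⊓ vecPerp Q p) := by
  rintro x ⟨hx, hxp⟩
  obtain ⟨a, ha⟩ := mem_span_singleton_sup_iff_sub_smul.1 hx
  have h := (map_sub_smul_of_map_eq_zero hp x a).symm.trans (hG _ ha)
  rwa [mem_vecPerp.1 hxp, mul_zero, sub_zero] at h

theorem eq_of_mem_span_singleton_sup {G G' : Submodule F V} (hG : IsTotallySingular Q G)
    (hG' : IsTotallySingular Q G') (hGG' : G ≠ G' → G ⊓ G' = ⊥) {p v : V} (hp : Q p = 0)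
    (hv : v ∉ vecPerp Q p) (hvG : v ∈ span F {p} ⊔ G) (hvG' : v ∈ span F {p} ⊔ G') : G = G' := by
  obtain ⟨a, ha⟩ := mem_span_singleton_sup_iff_sub_smul.1 hvG
  obtain ⟨b, hb⟩ := mem_span_singleton_sup_iff_sub_smul.1 hvG'
  have hab : a = b := by
    have h₁ := (map_sub_smul_of_map_eq_zero hp v a).symm.trans (hG _ ha)
    have h₂ := (map_sub_smul_of_map_eq_zero hp v b).symm.trans (hG' _ hb)
    exact mul_right_cancel₀ (show QuadraticMap.polar Q p v ≠ 0 from hv)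
      (by linear_combination h₂ - h₁)
  subst hab
  by_contra hne
  have h0 : v - a • p ∈ G ⊓ G' := ⟨ha, hb⟩
  rw [hGG' hne, mem_bot, sub_eq_zero] at h0
  refine hv ?_
  rw [h0, mem_vecPerp, QuadraticMap.polar_smul_right, QuadraticMap.polar_self, hp]
  simp

theorem finrank_span_singleton_sup_inf_vecPerp_inf [FiniteDimensional F V] {G U : Submodule F V}
    {p : V} {m : ℕ} (hp : Q p = 0) (hpG : p ∉ G) (hG : ¬ G ≤ vecPerp Q p)
    (hGm : finrank F G = m + 1) (hU : IsCoatom U) (hpU : p ∉ U) :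
    finrank F ↥(((span F {p} ⊔ G) ⊓ vecPerp Q p) ⊓ U) = m := by
  obtain ⟨x, hxG, hx⟩ := Set.not_subset.1 hG
  have hpp : p ∈ vecPerp Q p := by simp [mem_vecPerp, QuadraticMap.polar_self, hp]
  have h₁ := finrank_span_singleton_sup hpG
  have h₂ := finrank_inf_add_one_of_isCoatom (X := span F {p} ⊔ G) (isCoatom_vecPerp hx)
    (mem_sup_right hxG) hx
  have h₃ := finrank_inf_add_one_of_isCoatom hU
    (show p ∈ (span F {p} ⊔ G) ⊓ vecPerp Q p from
      ⟨mem_sup_left (mem_span_singleton_self p), hpp⟩) hpU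
  omega

/-- If `G` and `G'` are disjoint maximal totally singular subspaces and `p ∈ G + G'` is a singular
vector outside `G`, the form is hyperbolic on the trace of `(G + G') ∩ p^⊥` on a hyperplane
missing `p`. -/
theorem nondeg_and_finrank_eq_two_mul_wittIndex [FiniteDimensional F V] {G G' U : Submodule F V}
    {p : V} {m : ℕ} (hmax : ∀ X, IsTotallySingular Q X → finrank F X ≤ m + 1)
    (hG : IsTotallySingular Q G) (hGm : finrank F G = m + 1)
    (hG' : IsTotallySingular Q G') (hGm' : finrank F G' = m + 1) (hGG' : G ⊓ G' = ⊥)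
    (hp : Q p = 0) (hpGG' : p ∈ G ⊔ G') (hpG : p ∉ G) (hU : IsCoatom U) (hpU : p ∉ U)
    {M : Type*} [AddCommGroup M] [Module F M] {f : M →ₗ[F] V} (hf : Function.Injective f)
    (hrange : LinearMap.range f = vecPerp Q p ⊓ U) {W : Submodule F M}
    (hW : W = (G ⊔ G').comap f) :
    QuadNondeg ((Q.comp f).comp W.subtype) ∧
      finrank F W = 2 * wittIndex ((Q.comp f).comp W.subtype) := by
  have hfW : Function.Injective (f ∘ₗ W.subtype) := hf.comp W.injective_subtype
  have hrange' : LinearMap.range (f ∘ₗ W.subtype) = ((G ⊔ G') ⊓ vecPerp Q p) ⊓ U := by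
    rw [LinearMap.range_comp, range_subtype, hW, map_comap_eq, hrange, inf_comm, inf_assoc]
  have hperp : ¬ G ≤ vecPerp Q p := not_le_vecPerp_of_finrank_maximal (K := ⊤)
    (fun X _ => hmax X) le_top hG hGm trivial hp hpG
  have hle : ((span F {p} ⊔ G) ⊓ vecPerp Q p) ⊓ U ≤ LinearMap.range (f ∘ₗ W.subtype) := by
    rw [hrange']
    exact inf_le_inf_right _ (inf_le_inf_right _
      (sup_le ((span_singleton_le_iff_mem _ _).2 hpGG') le_sup_left))
  obtain ⟨h₁, h₂, h₃⟩ := nondeg_finrank_wittIndex_of_range_eq (K := G ⊔ G')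
    (fun v hv _ hvp => nondeg_sup_of_inf_eq_bot hmax hG hGm hG' hGm' hGG' hv hvp) hpGG' hp
    (fun h => hpG (h ▸ G.zero_mem)) hU hpU (fun X _ => hmax X) hfW hrange' hle
    (fun x hx => hG.span_singleton_sup_inf_vecPerp hp x (mem_inf.1 hx).1)
    (finrank_span_singleton_sup_inf_vecPerp_inf hp hpG hperp hGm hU hpU)
  have h₄ := Submodule.finrank_sup_add_finrank_inf_eq G G'
  rw [hGG', finrank_bot] at h₄
  refine ⟨h₁, ?_⟩
  change _ = 2 * wittIndex (Q.comp (f ∘ₗ W.subtype))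
  omega

end Witt

theorem construction_gives_avsp {F : Type*} [Field F] [Fintype F] (e r : ℕ)
    (he : e = 0 ∨ e = 1 ∨ e = 2) (hre : e + 3 ≤ r) (hmod : r % 2 = (e + 1) % 2)
    (V : Type*) [AddCommGroup V] [Module F V] [FiniteDimensional F V]
    (hdim : Module.finrank F V = r + 3)
    (Q : QuadraticForm F V) (hQnd : QuadNondeg Q)
    (hdef : Module.finrank F V = 2 * wittIndex Q + e)
    (S : Set (Submodule F V)) (hS : IsSpread Q S)
    (G₀ : Submodule F V) (hG₀ : G₀ ∈ S)
    (p : V) (hp : p ∈ G₀) (hp0 : p ≠ 0)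
    (U : Submodule F V) (hU : Module.finrank F ↥U = r + 2) (hpU : p ∉ U) :
    let H : Submodule F ↥U := (vecPerp Q p).comap U.subtype
    let QH : QuadraticForm F ↥H := Q.comp (U.subtype ∘ₗ H.subtype)
    let Pgen : Submodule F ↥H := G₀.comap (U.subtype ∘ₗ H.subtype)
    QuadNondeg QH ∧
    Module.finrank F ↥H = r + 1 ∧
    Module.finrank F ↥H = 2 * wittIndex QH + e ∧
    IsGenerator QH Pgen ∧
    IsAvsp e r H QH Pgen
      {X : Submodule F ↥U |
        ∃ G ∈ S, G ≠ G₀ ∧ X = (Submodule.span F {p} ⊔ G).comap U.subtype} := by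
  intro H QH Pgen
  obtain ⟨hgen, hdisj, hcov⟩ := hS
  obtain ⟨m, hw⟩ : ∃ m, wittIndex Q = m + 1 := ⟨wittIndex Q - 1, by omega⟩
  have hmax : ∀ X : Submodule F V, IsTotallySingular Q X → finrank F X ≤ m + 1 :=
    fun X hX => hw ▸ hX.finrank_le_wittIndex
  have hUc : IsCoatom U := isCoatom_of_finrank_add_one (by omega)
  obtain ⟨hG₀s, hG₀n⟩ := hgen G₀ hG₀
  have hQp : Q p = 0 := hG₀s p hp
  have hpp : p ∈ vecPerp Q p := hG₀s.polar_eq_zero hp hp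
  have hfinj : Function.Injective (U.subtype ∘ₗ H.subtype) :=
    U.injective_subtype.comp H.injective_subtype
  have hfrange : LinearMap.range (U.subtype ∘ₗ H.subtype) = (⊤ ⊓ vecPerp Q p) ⊓ U := by
    rw [LinearMap.range_comp, range_subtype, map_comap_eq, range_subtype, top_inf_eq, inf_comm]
  have hG₀U : finrank F ↥(G₀ ⊓ U) = m := by
    have := finrank_inf_add_one_of_isCoatom hUc hp hpU
    omega
  have hG₀f : G₀ ⊓ U ≤ LinearMap.range (U.subtype ∘ₗ H.subtype) := by
    rw [hfrange, top_inf_eq]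
    exact inf_le_inf_right _ fun x hx => hG₀s.polar_eq_zero hp hx
  obtain ⟨hnd, hHdim, hwH⟩ := nondeg_finrank_wittIndex_of_range_eq (K := ⊤)
    (fun v _ hv h => hQnd v hv fun x => h x trivial) trivial hQp hp0 hUc hpU
    (fun X _ => hmax X) hfinj hfrange hG₀f (fun x hx => hG₀s x hx.1) hG₀U
  rw [finrank_top] at hHdim
  have hHc : IsCoatom H := isCoatom_of_finrank_add_one (by omega)
  refine ⟨hnd, by omega, ?_, ⟨fun x hx => hG₀s _ hx, ?_⟩, ?_⟩
  · change finrank F H = 2 * wittIndex (Q.comp (U.subtype ∘ₗ H.subtype)) + e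
    omega
  · change _ = wittIndex (Q.comp (U.subtype ∘ₗ H.subtype))
    rw [hwH, ← hG₀U, finrank_comap_of_injective hfinj,
      le_antisymm (inf_le_inf_left G₀ (hfrange.le.trans inf_le_right)) (le_inf inf_le_left hG₀f)]
  have hpG : ∀ G ∈ S, G ≠ G₀ → p ∉ G := fun G hG hne hpG => hp0 <| by
    have h : p ∈ G ⊓ G₀ := ⟨hpG, hp⟩
    simpa [hdisj G hG G₀ hG₀ hne] using h
  have hpN : ∀ G : Submodule F V, p ∈ span F {p} ⊔ G :=
    fun G => mem_sup_left (mem_span_singleton_self p)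
  have hperp : ∀ G ∈ S, G ≠ G₀ → ¬ G ≤ vecPerp Q p := fun G hG hne =>
    not_le_vecPerp_of_finrank_maximal (K := ⊤) (fun X _ => hmax X) le_top (hgen G hG).1
      ((hgen G hG).2.trans hw) trivial hQp (hpG G hG hne)
  have hdimS : ∀ G ∈ S, G ≠ G₀ →
      finrank F ↥((span F {p} ⊔ G).comap U.subtype) = m + 1 := by
    intro G hG hne
    have h₁ := finrank_span_singleton_sup (hpG G hG hne)
    have h₂ := finrank_inf_add_one_of_isCoatom hUc (hpN G) hpU
    rw [finrank_comap_of_injective U.injective_subtype, range_subtype]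
    have := (hgen G hG).2
    omega
  have hnotle : ∀ G ∈ S, G ≠ G₀ → ¬ (span F {p} ⊔ G).comap U.subtype ≤ H := by
    intro G hG hne hle
    refine hperp G hG hne fun g hg => ?_
    obtain ⟨c, hc⟩ := exists_add_smul_mem_of_isCoatom hUc hpU g
    have hgc : g + c • p ∈ vecPerp Q p :=
      @hle ⟨g + c • p, hc⟩ (add_mem (mem_sup_right hg) (smul_mem _ c (hpN G)))
    simpa using sub_mem hgc (smul_mem _ c hpp)
  have hdimH : ∀ G ∈ S, G ≠ G₀ →
      finrank F ↥(((span F {p} ⊔ G).comap U.subtype).comap H.subtype) = m := by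
    intro G hG hne
    rw [← comap_comp, finrank_comap_of_injective hfinj, hfrange, top_inf_eq, ← inf_assoc]
    exact finrank_span_singleton_sup_inf_vecPerp_inf hQp (hpG G hG hne) (hperp G hG hne)
      ((hgen G hG).2.trans hw) hUc hpU
  have hpart : ∀ v ∉ H, ∃! X, X ∈ {X : Submodule F ↥U |
      ∃ G ∈ S, G ≠ G₀ ∧ X = (span F {p} ⊔ G).comap U.subtype} ∧ v ∈ X := by
    rintro ⟨v, hvU⟩ hv
    have hv' : QuadraticMap.polar Q p v ≠ 0 := hv
    obtain ⟨G, hG, hvG⟩ := hcov (v - (Q v / QuadraticMap.polar Q p v) • p) (by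
      rw [map_sub_smul_of_map_eq_zero hQp]
      field_simp
      ring)
    have hne : G ≠ G₀ := by
      rintro rfl
      refine hv' ?_
      have := hG₀s.polar_eq_zero hp (add_mem hvG (smul_mem _ (Q v / QuadraticMap.polar Q p v) hp))
      rwa [sub_add_cancel] at this
    have hvN : v ∈ span F {p} ⊔ G := mem_span_singleton_sup_iff_sub_smul.2 ⟨_, hvG⟩
    refine ⟨_, ⟨⟨G, hG, hne, rfl⟩, hvN⟩, ?_⟩
    rintro _ ⟨⟨G', hG', -, rfl⟩, hvG'⟩
    rw [eq_of_mem_span_singleton_sup (hgen G hG).1 (hgen G' hG').1 (hdisj G hG G' hG') hQp hv' hvN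
      hvG']
  have hinter : ∀ G ∈ S, G ≠ G₀ → ∀ G' ∈ S, G' ≠ G₀ → G ≠ G' →
      finrank F ↥((span F {p} ⊔ G).comap U.subtype ⊓ (span F {p} ⊔ G').comap U.subtype) ≤ 1 := by
    intro G hG hGne G' hG' hGne' hne
    rw [← comap_inf, finrank_comap_of_injective U.injective_subtype, range_subtype]
    have h₁ := finrank_inf_add_one_of_isCoatom hUc
      (show p ∈ (span F {p} ⊔ G) ⊓ (span F {p} ⊔ G') from ⟨hpN G, hpN G'⟩) hpU
    have h₂ := finrank_span_singleton_sup_inf_le_two (hpG G hG hGne) (hpG G' hG' hGne')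
      (hdisj G hG G' hG' hne)
    omega
  refine ⟨?_, ?_, ?_, ?_, ?_, ?_, ?_⟩
  · have hcount := ncard_mul_pow_eq_pow (k := m) (n := r + 1) hHc hU (by
      rintro _ ⟨G, hG, hne, rfl⟩
      exact ⟨hdimS G hG hne, hnotle G hG hne⟩) hpart
    refine Nat.eq_of_mul_eq_mul_right (pow_pos Fintype.card_pos m) (hcount.trans ?_)
    rw [← pow_add]
    congr 1
    omega
  · rintro _ ⟨G, hG, hne, rfl⟩
    exact ⟨by rw [hdimS G hG hne]; omega, hnotle G hG hne⟩
  · intro L hL hLH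
    obtain ⟨v, hvL, hv⟩ := Set.not_subset.1 hLH
    have hspan : L = span F {v} := by
      have hv0 : v ≠ 0 := fun h => hv (h ▸ H.zero_mem)
      refine (Submodule.eq_of_le_of_finrank_eq ((span_singleton_le_iff_mem _ _).2 hvL) ?_).symm
      rw [finrank_span_singleton hv0, hL]
    simpa only [hspan, span_singleton_le_iff_mem] using hpart v hv
  · rintro _ ⟨G, hG, hne, rfl⟩
    refine ⟨⟨fun x hx => ?_, ?_⟩, ?_⟩
    · exact (hgen G hG).1.span_singleton_sup_inf_vecPerp hQp _ ⟨hx, x.2⟩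
    · change _ = wittIndex (Q.comp (U.subtype ∘ₗ H.subtype))
      rw [hwH, hdimH G hG hne]
    · refine (Submodule.eq_bot_iff _).2 ?_
      rintro ⟨⟨x, hxU⟩, hxH⟩ ⟨hxN, hx₀⟩
      obtain ⟨a, ha⟩ := mem_span_singleton_sup_iff_sub_smul.1 hxN
      change x - a • p ∈ G at ha
      have hx : x ∈ G₀ := hx₀
      have h0 : x - a • p ∈ G ⊓ G₀ := ⟨ha, sub_mem hx (smul_mem _ a hp)⟩
      rw [hdisj G hG G₀ hG₀ hne, mem_bot, sub_eq_zero] at h0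
      have ha0 : a = 0 := eq_zero_of_smul_mem hpU (h0 ▸ hxU)
      rw [ha0, zero_smul] at h0
      exact Subtype.ext (Subtype.ext h0)
  · rintro _ ⟨G, hG, hGne, rfl⟩ _ ⟨G', hG', hGne', rfl⟩ hST heq
    have h₁ := hinter G hG hGne G' hG' hGne' fun h => hST (by rw [h])
    have h₂ := hdimH G hG hGne
    have h₃ : ((span F {p} ⊔ G).comap U.subtype).comap H.subtype ≤
        ((span F {p} ⊔ G).comap U.subtype ⊓ (span F {p} ⊔ G').comap U.subtype).comap H.subtype :=
      le_inf le_rfl heq.le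
    have h₄ := Submodule.finrank_mono h₃
    rw [finrank_comap_of_injective H.injective_subtype (_ ⊓ _)] at h₄
    have h₅ := h₄.trans (Submodule.finrank_mono inf_le_left)
    omega
  · rintro _ ⟨G, hG, hGne, rfl⟩ _ ⟨G', hG', hGne', rfl⟩ hST
    exact hinter G hG hGne G' hG' hGne' fun h => hST (by rw [h])
  · rintro _ ⟨G, hG, hGne, rfl⟩ _ ⟨G', hG', hGne', rfl⟩ hST hone
    have hne : G ≠ G' := fun h => hST (by rw [h])
    obtain ⟨hGs, hGn⟩ := hgen G hG
    obtain ⟨hGs', hGn'⟩ := hgen G' hG'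
    have hGG' := hdisj G hG G' hG' hne
    have hpGG' : p ∈ G ⊔ G' := by
      obtain ⟨x, ⟨hxN, hxN'⟩, hx0⟩ := Submodule.exists_mem_ne_zero_of_ne_bot (p :=
        ((span F {p} ⊔ G).comap U.subtype).comap H.subtype ⊓
          ((span F {p} ⊔ G').comap U.subtype).comap H.subtype) (by
          intro h
          rw [h, finrank_bot] at hone
          omega)
      exact mem_sup_of_mem_span_singleton_sup hpU hGG' (x : U).2
        (fun h => hx0 (Subtype.ext (Subtype.ext h))) hxN hxN'
    have hNN : (span F {p} ⊔ G) ⊔ (span F {p} ⊔ G') = G ⊔ G' := by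
      rw [← sup_sup_distrib_left, sup_eq_right, span_singleton_le_iff_mem]
      exact hpGG'
    rw [comap_subtype_sup_of_isCoatom hUc hpU (hpN G) (hpN G'), hNN]
    exact nondeg_and_finrank_eq_two_mul_wittIndex hmax hGs (hGn.trans hw) hGs'
      (hGn'.trans hw) hGG' hQp hpGG' (hpG G hG hGne) hUc hpU hfinj
      (hfrange.trans (by rw [top_inf_eq])) rfl
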